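/- Let ℓ ≥ 1 be an integer and ω₂ ∈ ℝ. Let B̌ be the ℓ×ℓ complex tridiagonal matrix with (B̌)_{1,1} = 5, (B̌)_{j,j} = 4 for 2 ≤ j ≤ ℓ, (B̌)_{j,j+1} = (B̌)_{j+1,j} = 1 for 1 ≤ j ≤ ℓ−1, and all other entries 0, and define ℬ₁ = −(1/3)·(B̌ − 3·exp(−i ω₂)·𝟙·e₁ᵀ) and b₁ = (1/3)·(−3·exp(−i ω₂)·𝟙 + e_ℓ). Then: (a) B₀·𝟙 = −e_ℓ (so β₀ = 𝟙 solves (2/3)·B₀·β₀ = −(2/3)·e_ℓ); (b) b₁ − ℬ₁·𝟙 = 2·(1 − exp(−i ω₂))·𝟙; and (c) every β₁ ∈ ℂ^ℓ satisfying (2/3)·B₀·β₁ = 2·(1 − exp(−i ω₂))·𝟙 has first entry (β₁)₁ = −(3/2)·ℓ(ℓ+1)·(1 − exp(−i ω₂)). -/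

import Mathlib

open Matrix Complex

/-- The ℓ×ℓ complex tridiagonal matrix B₀ with (B₀)₁₁ = −1, other diagonal
entries −2, and super/sub-diagonal entries 1. -/
def B0C (ℓ : ℕ) : Matrix (Fin ℓ) (Fin ℓ) ℂ := fun i j =>
  if i = j then (if (i : ℕ) = 0 then -1 else -2)
  else if (i : ℕ) + 1 = (j : ℕ) ∨ (j : ℕ) + 1 = (i : ℕ) then 1 else 0

/-- The ℓ×ℓ complex tridiagonal matrix B̌ with (B̌)₁₁ = 5, other diagonal
entries 4, and super/sub-diagonal entries 1. -/
def Bcheck (ℓ : ℕ) : Matrix (Fin ℓ) (Fin ℓ) ℂ := fun i j =>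
  if i = j then (if (i : ℕ) = 0 then 5 else 4)
  else if (i : ℕ) + 1 = (j : ℕ) ∨ (j : ℕ) + 1 = (i : ℕ) then 1 else 0

/-- The first standard basis vector e₁ of ℂ^ℓ. -/
def e1 (ℓ : ℕ) : Fin ℓ → ℂ := fun j => if (j : ℕ) = 0 then 1 else 0

/-- The last standard basis vector e_ℓ of ℂ^ℓ. -/
def eL (ℓ : ℕ) : Fin ℓ → ℂ := fun j => if (j : ℕ) = ℓ - 1 then 1 else 0

/-- The all-ones vector 𝟙 of ℂ^ℓ. -/
def ones (ℓ : ℕ) : Fin ℓ → ℂ := fun _ => 1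

/-!
`B₀` is the second-difference operator with a reflecting end at index `0` and an absorbing end at
index `ℓ`, so it sends `𝟙` to `-e_ℓ` and the linear profile `j ↦ ℓ - j` to `-e₁`. Since `B₀` is
symmetric, pairing `B₀ v` with that profile recovers `-v₀`; for a constant right-hand side this
pairing is a triangular number. The identity for `B̌` is that of `B₀`, because `B̌ = B₀ + 6`.
-/

/-- The vector with entries `ℓ, ℓ - 1, …, 1`: up to sign, the first column of the inverse of `B₀`,
i.e. its discrete Green's function with source at the first node. -/
def linearProfile (ℓ : ℕ) : Fin ℓ → ℂ := fun j => ℓ - (j : ℕ)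

theorem B0C_isSymm (ℓ : ℕ) : (B0C ℓ).IsSymm := by
  ext i j
  simp only [transpose_apply, B0C, or_comm, Fin.ext_iff]
  split_ifs <;> first | rfl | omega

theorem Bcheck_eq_B0C_add (ℓ : ℕ) : Bcheck ℓ = B0C ℓ + (6 : ℂ) • 1 := by
  ext i j
  simp only [Bcheck, B0C, Matrix.add_apply, Matrix.smul_apply, one_apply, smul_eq_mul]
  split_ifs <;> norm_num

-- At `i = 0` the truncated `i - 1` is `0`, which is exactly the reflecting boundary condition.
theorem B0C_apply {ℓ : ℕ} (i j : Fin ℓ) :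
    B0C ℓ i j = ((if (j : ℕ) = i + 1 then 1 else 0) - (if (j : ℕ) = i then 1 else 0))
      - ((if (j : ℕ) = i then 1 else 0) - (if (j : ℕ) = i - 1 then 1 else 0)) := by
  simp only [B0C, Fin.ext_iff]
  split_ifs <;> first | omega | norm_num

theorem B0C_mulVec_apply {ℓ : ℕ} (f : ℕ → ℂ) (i : Fin ℓ) :
    (B0C ℓ *ᵥ fun j => f j) i = (f (i + 1) - f i) - (f i - f (i - 1)) - f ℓ * eL ℓ i := by
  have sum_indicator (k : ℕ) :
      ∑ j : Fin ℓ, (if (j : ℕ) = k then 1 else 0) * f j = if k < ℓ then f k else 0 := by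
    rw [Fin.sum_univ_eq_sum_range (fun j => (if j = k then 1 else 0) * f j) ℓ]
    simp only [ite_mul, one_mul, zero_mul, Finset.sum_ite_eq', Finset.mem_range]
  have boundary : (if (i : ℕ) + 1 < ℓ then f (i + 1) else 0) = f (i + 1) - f ℓ * eL ℓ i := by
    by_cases hi : (i : ℕ) + 1 < ℓ
    · simp [hi, eL, show (i : ℕ) ≠ ℓ - 1 by omega]
    · have eL_eq_one : eL ℓ i = 1 := if_pos (by omega)
      rw [if_neg hi, eL_eq_one, show (i : ℕ) + 1 = ℓ by omega, mul_one, sub_self]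
  simp only [mulVec, dotProduct, B0C_apply, sub_mul, Finset.sum_sub_distrib, sum_indicator,
    boundary, i.isLt, show (i : ℕ) - 1 < ℓ by omega, if_true]
  ring

theorem B0C_mulVec_ones (ℓ : ℕ) : B0C ℓ *ᵥ ones ℓ = -eL ℓ := by
  ext i
  change (B0C ℓ *ᵥ fun _ => 1) i = -eL ℓ i
  simpa using B0C_mulVec_apply (fun _ => 1) i

theorem Bcheck_mulVec_ones (ℓ : ℕ) : Bcheck ℓ *ᵥ ones ℓ = (6 : ℂ) • ones ℓ - eL ℓ := by
  rw [Bcheck_eq_B0C_add, add_mulVec, smul_mulVec, one_mulVec, B0C_mulVec_ones]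
  abel

theorem B0C_mulVec_linearProfile (ℓ : ℕ) : B0C ℓ *ᵥ linearProfile ℓ = -e1 ℓ := by
  ext i
  have second_difference : (B0C ℓ *ᵥ linearProfile ℓ) i = _ :=
    B0C_mulVec_apply (fun k => (ℓ : ℂ) - k) i
  rw [second_difference]
  rcases Nat.eq_zero_or_pos (i : ℕ) with hi | hi
  · simp [e1, hi]
  · simp [e1, hi.ne', Nat.cast_sub hi]

theorem e1_dotProduct {ℓ : ℕ} (hℓ : 0 < ℓ) (v : Fin ℓ → ℂ) : e1 ℓ ⬝ᵥ v = v ⟨0, hℓ⟩ := by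
  have e1_eq_single : e1 ℓ = Pi.single ⟨0, hℓ⟩ 1 := by
    ext j
    simp [e1, Pi.single_apply, Fin.ext_iff]
  rw [e1_eq_single, single_one_dotProduct]

theorem linearProfile_dotProduct_B0C_mulVec {ℓ : ℕ} (hℓ : 0 < ℓ) (v : Fin ℓ → ℂ) :
    linearProfile ℓ ⬝ᵥ (B0C ℓ *ᵥ v) = -v ⟨0, hℓ⟩ := by
  rw [dotProduct_mulVec, ← mulVec_transpose, (B0C_isSymm ℓ).eq, B0C_mulVec_linearProfile,
    neg_dotProduct, e1_dotProduct hℓ]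

theorem linearProfile_dotProduct_const (ℓ : ℕ) (c : ℂ) :
    linearProfile ℓ ⬝ᵥ (fun _ => c) = ℓ * (ℓ + 1) / 2 * c := by
  have sum_profile (n : ℕ) (a : ℂ) :
      ∑ j ∈ Finset.range n, (a - j) = n * a - n * (n - 1) / 2 := by
    induction n with
    | zero => simp
    | succ n ih => rw [Finset.sum_range_succ, ih]; push_cast; ring
  simp only [dotProduct, linearProfile]
  rw [← Finset.sum_mul, Fin.sum_univ_eq_sum_range (fun j => (ℓ : ℂ) - j) ℓ, sum_profile]
  ring

theorem fe_ellx1_first_order_omega1_zero_general (ℓ : ℕ) (hℓ : 0 < ℓ) (z : ℂ) :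
    B0C ℓ *ᵥ ones ℓ = -eL ℓ ∧
    (1 / 3 : ℂ) • ((-(3 * z)) • ones ℓ + eL ℓ)
      - ((-(1 / 3 : ℂ)) • (Bcheck ℓ - (3 * z) • vecMulVec (ones ℓ) (e1 ℓ))) *ᵥ ones ℓ
      = (fun _ => 2 * (1 - z)) ∧
    ∀ β₁ : Fin ℓ → ℂ,
      ((2 / 3 : ℂ) • B0C ℓ) *ᵥ β₁ = (fun _ => 2 * (1 - z)) →
      β₁ ⟨0, hℓ⟩ = -(3 / 2 : ℂ) * ℓ * (ℓ + 1) * (1 - z) := by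
  refine ⟨B0C_mulVec_ones ℓ, ?_, fun β₁ hβ₁ => ?_⟩
  · have rank_one : vecMulVec (ones ℓ) (e1 ℓ) *ᵥ ones ℓ = ones ℓ := by
      rw [vecMulVec_mulVec, e1_dotProduct hℓ]
      simp [ones]
    rw [smul_mulVec, sub_mulVec, smul_mulVec, Bcheck_mulVec_ones, rank_one]
    ext j
    simp only [ones, Pi.sub_apply, Pi.add_apply, Pi.smul_apply, smul_eq_mul]
    ring
  · have green : (2 / 3 : ℂ) * -β₁ ⟨0, hℓ⟩ = ℓ * (ℓ + 1) / 2 * (2 * (1 - z)) := calc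
      (2 / 3 : ℂ) * -β₁ ⟨0, hℓ⟩ = linearProfile ℓ ⬝ᵥ (((2 / 3 : ℂ) • B0C ℓ) *ᵥ β₁) := by
        rw [smul_mulVec, dotProduct_smul, linearProfile_dotProduct_B0C_mulVec hℓ, smul_eq_mul]
      _ = ℓ * (ℓ + 1) / 2 * (2 * (1 - z)) := by
        rw [hβ₁, linearProfile_dotProduct_const]
    linear_combination (-3 / 2 : ℂ) * green

theorem fe_ellx1_first_order_omega1_zero (ℓ : ℕ) (hℓ : 0 < ℓ) (ω₂ : ℝ) :
    (B0C ℓ).mulVec (ones ℓ) = -(eL ℓ) ∧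
    ((1 / 3 : ℂ) • ((-(3 * Complex.exp (-(Complex.I * ω₂)))) • ones ℓ + eL ℓ)
      - ((-(1 / 3 : ℂ)) • (Bcheck ℓ
          - (3 * Complex.exp (-(Complex.I * ω₂))) •
              Matrix.vecMulVec (ones ℓ) (e1 ℓ))).mulVec (ones ℓ)
      = fun _ => 2 * (1 - Complex.exp (-(Complex.I * ω₂)))) ∧
    ∀ β₁ : Fin ℓ → ℂ,
      ((2 / 3 : ℂ) • B0C ℓ).mulVec β₁ =
        (fun _ => 2 * (1 - Complex.exp (-(Complex.I * ω₂)))) →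
      β₁ ⟨0, hℓ⟩ = -(3 / 2 : ℂ) * ℓ * (ℓ + 1)
        * (1 - Complex.exp (-(Complex.I * ω₂))) :=
  fe_ellx1_first_order_omega1_zero_general ℓ hℓ (Complex.exp (-(Complex.I * ω₂)))
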